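/- arXiv:1710.02329 — 2 statements merged into one kernel-verified Lean document; each statement's English description precedes it below -/
import Mathlib

section
/- Every complete deterministic register automaton (L, R, Σ, T) over an infinite data domain D that admits a synchronizing data word admits a synchronizing data word w with data efficiency |data(w)| ≤ 2|R| + 1. -/
open scoped Classical

/-- Register constraints over a set `R` of registers: built from the atom `true` and
atoms `= r` for `r ∈ R` using conjunction and negation. -/
inductive RC (R : Type) : Type
  | tt : RC R
  | req : R → RC R
  | conj : RC R → RC R → RC R
  | neg : RC R → RC R

/-- Satisfaction of a register constraint by a register valuation `ν` and a datum `d`. -/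
def RC.sat {R D : Type} (ν : R → D) (d : D) : RC R → Prop
  | RC.tt => True
  | RC.req r => ν r = d
  | RC.conj φ ψ => RC.sat ν d φ ∧ RC.sat ν d ψ
  | RC.neg φ => ¬ RC.sat ν d φ

/-- A configuration: a location together with a register valuation. -/
abbrev Config (L R D : Type) : Type := L × (R → D)

/-- A transition: source location, letter, guard, update set, target location. -/
abbrev RATrans (L A R : Type) : Type := L × A × RC R × Set R × L

/-- The update `ν[up := d]` of a register valuation. -/
noncomputable def updVal {R D : Type} (ν : R → D) (up : Set R) (d : D) : R → D :=
  fun r => if r ∈ up then d else ν r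

/-- One-step successor relation of the register automaton with transition relation `T`:
`Step T q (a, d) q'` holds iff `q' ∈ post(q, (a, d))`. -/
def Step {L A R D : Type} (T : Set (RATrans L A R)) (q : Config L R D) (i : A × D)
    (q' : Config L R D) : Prop :=
  ∃ (φ : RC R) (up : Set R) (ℓ' : L),
    (q.1, i.1, φ, up, ℓ') ∈ T ∧ RC.sat q.2 i.2 φ ∧ q' = (ℓ', updVal q.2 up i.2)

/-- `post` of a set of configurations on a single input. -/
def postStep {L A R D : Type} (T : Set (RATrans L A R)) (S : Set (Config L R D)) (i : A × D) :
    Set (Config L R D) :=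
  {q' | ∃ q ∈ S, Step T q i q'}

/-- `post` of a set of configurations on a data word. -/
def postWord {L A R D : Type} (T : Set (RATrans L A R)) (S : Set (Config L R D)) :
    List (A × D) → Set (Config L R D)
  | [] => S
  | i :: w => postWord T (postStep T S i) w

/-- Completeness: every configuration has at least one successor on every input. -/
def RAComplete (D : Type) {L A R : Type} (T : Set (RATrans L A R)) : Prop :=
  ∀ (q : Config L R D) (i : A × D), ∃ q', Step T q i q'

/-- Determinism: every configuration has at most one successor on every input. -/
def RADet (D : Type) {L A R : Type} (T : Set (RATrans L A R)) : Prop :=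
  ∀ (q : Config L R D) (i : A × D) (q₁ q₂ : Config L R D),
    Step T q i q₁ → Step T q i q₂ → q₁ = q₂

/-- The set of data values occurring in a data word. -/
def dataSet {A D : Type} (w : List (A × D)) : Set D := {d | ∃ p ∈ w, p.2 = d}

/-- A synchronizing data word: a nonempty data word sending the set of all
configurations to a single configuration. -/
def IsSync (D : Type) {L A R : Type} (T : Set (RATrans L A R)) (w : List (A × D)) : Prop :=
  w ≠ [] ∧ ∃ q : Config L R D, postWord T (Set.univ : Set (Config L R D)) w = {q}

/-!
The successor function of a complete deterministic register automaton commutes with permutations of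
the data domain, and this is all that the argument uses. Fix a set `Z` of `2|R| + 1` data values
and two configurations `p`, `q`. Permuting a synchronizing word away from the registers of `p` and
`q` keeps it synchronizing. It can then be pushed into `Z` letter by letter: the at most `2|R|`
values in the registers of `p` and `q` cannot exhaust `Z`, so the next datum, if it lies outside
`Z`, is fresh for both configurations and can be swapped with an unused value of `Z` throughout the
rest of the word. So every pair is merged by a word over `Z`. Which words over `Z` merge a pair
depends only on the locations and on the equalities among its registers and the elements of `Z`;
hence there are finitely many kinds of pairs, and merging one pair of each kind in turn
synchronizes the automaton.
-/

section Data

variable {D ι : Type*}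

theorem exists_perm_apply_eq [Infinite D] [Finite ι] {f g : ι → D}
    (h : ∀ i j, f i = f j ↔ g i = g j) : ∃ τ : Equiv.Perm D, ∀ i, τ (f i) = g i := by
  have g_splitting (i : ι) : g (Set.rangeSplitting f ⟨f i, i, rfl⟩) = g i :=
    (h _ _).1 (Set.apply_rangeSplitting f _)
  have injective : Function.Injective fun x : Set.range f => g (Set.rangeSplitting f x) :=
    fun x y hxy => Subtype.ext <| by
      simpa only [Set.apply_rangeSplitting] using (h _ _).2 hxy
  obtain ⟨τ, hτ⟩ := Cardinal.extend_function_of_lt ⟨_, injective⟩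
    ((Set.finite_range f).lt_aleph0.trans_le (Cardinal.aleph0_le_mk D)) ⟨Equiv.refl D⟩
  exact ⟨τ, fun i => (hτ ⟨f i, i, rfl⟩).trans (g_splitting i)⟩

theorem exists_perm_disjoint_image [Infinite D] {W F : Set D} (hW : W.Finite) (hF : F.Finite) :
    ∃ τ : Equiv.Perm D, Disjoint (τ '' W) F := by
  have := hW.to_subtype
  obtain ⟨e⟩ : Nonempty (D ↪ (Fᶜ : Set D)) := by
    rw [← Cardinal.le_def,
      Cardinal.mk_compl_of_infinite F (hF.lt_aleph0.trans_le (Cardinal.aleph0_le_mk D))]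
  obtain ⟨τ, hτ⟩ := exists_perm_apply_eq (f := fun x : W => (x : D)) (g := fun x : W => (e x : D))
    fun x y => by rw [Subtype.coe_inj (a := e x), e.apply_eq_iff_eq]
  refine ⟨τ, Set.disjoint_left.2 ?_⟩
  rintro _ ⟨d, hd, rfl⟩
  rw [hτ ⟨d, hd⟩]
  exact (e d).2

theorem exists_perm_fixing_apply_mem {F Z : Set D} (hF : F.Finite) (hcard : F.ncard < Z.ncard)
    {d : D} (hd : d ∈ F → d ∈ Z) :
    ∃ τ : Equiv.Perm D, (∀ e ∈ F, τ e = e) ∧ τ d ∈ Z := by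
  by_cases hdZ : d ∈ Z
  · exact ⟨Equiv.refl D, fun _ _ => rfl, hdZ⟩
  · obtain ⟨z, hzZ, hzF⟩ := Set.exists_mem_notMem_of_ncard_lt_ncard hcard hF
    refine ⟨Equiv.swap d z, fun e he => Equiv.swap_apply_of_ne_of_ne ?_ ?_, ?_⟩
    · rintro rfl
      exact hdZ (hd he)
    · rintro rfl
      exact hzF he
    · rwa [Equiv.swap_apply_left]

theorem ncard_range_union_range_le [Fintype ι] (f g : ι → D) :
    (Set.range f ∪ Set.range g).ncard ≤ 2 * Fintype.card ι := by
  have ncard_range_le (f : ι → D) : (Set.range f).ncard ≤ Fintype.card ι :=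
    Nat.card_eq_fintype_card (α := ι) ▸ Finite.card_range_le f
  linarith [Set.ncard_union_le (Set.range f) (Set.range g), ncard_range_le f, ncard_range_le g]

end Data

section DataSet

variable {A D : Type}

theorem dataSet_finite (w : List (A × D)) : (dataSet w).Finite :=
  (List.finite_toSet w).image Prod.snd

@[simp]
theorem dataSet_nil : dataSet ([] : List (A × D)) = ∅ := by
  simp [dataSet]

@[simp]
theorem dataSet_cons (i : A × D) (w : List (A × D)) :
    dataSet (i :: w) = insert i.2 (dataSet w) := by
  ext d
  simp [dataSet, eq_comm]

@[simp]
theorem dataSet_append (u v : List (A × D)) : dataSet (u ++ v) = dataSet u ∪ dataSet v := by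
  ext d
  simp [dataSet, or_and_right, exists_or]

@[simp]
theorem dataSet_map {E : Type} (f : D → E) (w : List (A × D)) :
    dataSet (w.map (Prod.map id f)) = f '' dataSet w := by
  induction w with
  | nil => simp
  | cons i w ih => simp [ih, Set.image_insert_eq]

end DataSet

section Merges

/-- The word `w` merges the states `p` and `q` of the deterministic system with transition function
`δ`: it leads from both to the same state. -/
def Merges {Q I : Type} (δ : Q → I → Q) (w : List I) (p q : Q) : Prop :=
  w.foldl δ p = w.foldl δ q

variable {Q I A D : Type}

theorem merges_append {δ : Q → I → Q} {u v : List I} {p q : Q} :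
    Merges δ (u ++ v) p q ↔ Merges δ v (u.foldl δ p) (u.foldl δ q) := by
  simp only [Merges, List.foldl_append]

theorem Merges.append {δ : Q → I → Q} {u : List I} {p q : Q} (h : Merges δ u p q)
    (v : List I) : Merges δ (u ++ v) p q :=
  merges_append.2 (congrArg (v.foldl δ) h)

variable {δ : Q → A × D → Q}

theorem exists_forall_mem_merges {Z : Set D}
    (h : ∀ p q, ∃ v, dataSet v ⊆ Z ∧ Merges δ v p q) {P : Set (Q × Q)} (hP : P.Finite) :
    ∃ v, dataSet v ⊆ Z ∧ ∀ x ∈ P, Merges δ v x.1 x.2 := by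
  induction P, hP using Set.Finite.induction_on with
  | empty => exact ⟨[], by simp⟩
  | @insert x P _ _ ih =>
    obtain ⟨u, huZ, hu⟩ := ih
    obtain ⟨v, hvZ, hv⟩ := h (u.foldl δ x.1) (u.foldl δ x.2)
    refine ⟨u ++ v, dataSet_append u v ▸ Set.union_subset huZ hvZ, ?_⟩
    rintro y (rfl | hy)
    · exact merges_append.2 hv
    · exact (hu y hy).append v

theorem exists_forall_merges_of_invariant {Z : Set D} {K : Type} [Finite K] (t : Q × Q → K)
    (ht : ∀ v, dataSet v ⊆ Z → ∀ x y, t x = t y → Merges δ v x.1 x.2 → Merges δ v y.1 y.2)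
    (h : ∀ p q, ∃ v, dataSet v ⊆ Z ∧ Merges δ v p q) :
    ∃ v, dataSet v ⊆ Z ∧ ∀ p q, Merges δ v p q := by
  let representative := Set.rangeSplitting t
  obtain ⟨v, hvZ, hv⟩ := exists_forall_mem_merges h (Set.finite_range representative)
  refine ⟨v, hvZ, fun p q => ?_⟩
  exact ht v hvZ (representative ⟨t (p, q), Set.mem_range_self _⟩) (p, q)
    (Set.apply_rangeSplitting t _) (hv _ (Set.mem_range_self _))

end Merges

section Equivariant

variable {L A R D : Type}

/-- The configuration obtained from `q` by applying `f` to the content of every register. -/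
def Config.map {E : Type} (f : D → E) (q : Config L R D) : Config L R E := (q.1, f ∘ q.2)

theorem Config.map_injective {E : Type} {f : D → E} (hf : f.Injective) :
    (Config.map f : Config L R D → Config L R E).Injective :=
  Function.injective_id.prodMap hf.comp_left

theorem Config.map_eq_self {f : D → D} {q : Config L R D} (h : ∀ d ∈ Set.range q.2, f d = d) :
    Config.map f q = q :=
  Prod.ext rfl (funext fun r => h _ (Set.mem_range_self r))

/-- A transition function on configurations is equivariant if it commutes with permutations of the
data domain, which act on registers and input data and leave locations and letters alone. -/
def IsEquivariant (δ : Config L R D → A × D → Config L R D) : Prop :=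
  ∀ (τ : Equiv.Perm D) (q : Config L R D) (i : A × D),
    δ (Config.map τ q) (Prod.map id τ i) = Config.map τ (δ q i)

variable {δ : Config L R D → A × D → Config L R D}

theorem IsEquivariant.foldl_map (hδ : IsEquivariant δ) (τ : Equiv.Perm D) (w : List (A × D))
    (q : Config L R D) :
    (w.map (Prod.map id τ)).foldl δ (Config.map τ q) = Config.map τ (w.foldl δ q) := by
  rw [List.foldl_map]
  exact List.foldl_hom (Config.map τ) (hδ τ)

theorem IsEquivariant.merges_map (hδ : IsEquivariant δ) (τ : Equiv.Perm D) {w : List (A × D)}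
    {p q : Config L R D} :
    Merges δ (w.map (Prod.map id τ)) (Config.map τ p) (Config.map τ q) ↔ Merges δ w p q := by
  rw [Merges, hδ.foldl_map, hδ.foldl_map, (Config.map_injective τ.injective).eq_iff, Merges]

theorem IsEquivariant.merges_map_of_fixed (hδ : IsEquivariant δ) {τ : Equiv.Perm D}
    {w : List (A × D)} (hw : ∀ d ∈ dataSet w, τ d = d) {p q : Config L R D} :
    Merges δ w (Config.map τ p) (Config.map τ q) ↔ Merges δ w p q := by
  have map_eq : w.map (Prod.map id τ) = w := by
    refine (List.map_congr_left fun i hi => ?_).trans (List.map_id w)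
    exact Prod.ext rfl (hw _ ⟨i, hi, rfl⟩)
  simpa only [map_eq] using hδ.merges_map τ (w := w) (p := p) (q := q)

-- A value of the successor that is neither read nor stored before could be swapped with any other
-- such value.
theorem IsEquivariant.range_subset [Infinite D] [Finite R] (hδ : IsEquivariant δ)
    (q : Config L R D) (i : A × D) :
    Set.range (δ q i).2 ⊆ insert i.2 (Set.range q.2) := by
  rintro _ ⟨r, rfl⟩
  by_contra hr
  obtain ⟨e, he⟩ := (((Set.finite_range q.2).insert i.2).insert ((δ q i).2 r)).exists_notMem
  rw [Set.mem_insert_iff, not_or] at he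
  have swap_fixes (d : D) (hd : d ∈ insert i.2 (Set.range q.2)) :
      Equiv.swap ((δ q i).2 r) e d = d :=
    Equiv.swap_apply_of_ne_of_ne (ne_of_mem_of_not_mem hd hr) (ne_of_mem_of_not_mem hd he.2)
  have hfixed := hδ (Equiv.swap ((δ q i).2 r) e) q i
  rw [Config.map_eq_self fun d hd => swap_fixes d (Set.mem_insert_of_mem _ hd),
    show Prod.map id _ i = i from Prod.ext rfl (swap_fixes _ (Set.mem_insert _ _))] at hfixed
  have hre : (δ q i).2 r = e :=
    (congrFun (congrArg Prod.snd hfixed) r).trans (Equiv.swap_apply_left _ _)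
  exact he.1 hre.symm

theorem IsEquivariant.exists_merges_of_inter_subset [Infinite D] [Fintype R]
    (hδ : IsEquivariant δ) {Z : Set D} (hZ : 2 * Fintype.card R < Z.ncard) (w : List (A × D))
    {p q : Config L R D} (hw : Merges δ w p q)
    (hwZ : dataSet w ∩ (Set.range p.2 ∪ Set.range q.2) ⊆ Z) :
    ∃ v, dataSet v ⊆ Z ∧ Merges δ v p q := by
  induction hn : w.length generalizing w p q with
  | zero => exact ⟨w, by simp [List.length_eq_zero_iff.1 hn], hw⟩
  | succ n ih =>
    obtain ⟨⟨a, d⟩, w, rfl⟩ := List.exists_cons_of_length_eq_add_one hn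
    obtain ⟨τ, hτ, hτd⟩ := exists_perm_fixing_apply_mem
      ((Set.finite_range p.2).union (Set.finite_range q.2))
      ((ncard_range_union_range_le p.2 q.2).trans_lt hZ) (d := d)
      fun hd => hwZ ⟨by simp, hd⟩
    have hw' : Merges δ (w.map (Prod.map id τ)) (δ p (a, τ d)) (δ q (a, τ d)) := by
      have := (hδ.merges_map τ).2 hw
      rwa [Config.map_eq_self fun e he => hτ e (Or.inl he),
        Config.map_eq_self fun e he => hτ e (Or.inr he)] at this
    have hwZ' : dataSet (w.map (Prod.map id τ)) ∩
        (Set.range (δ p (a, τ d)).2 ∪ Set.range (δ q (a, τ d)).2) ⊆ Z := by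
      rw [dataSet_map]
      rintro _ ⟨⟨e, he, rfl⟩, hregs⟩
      obtain h | h : τ e = τ d ∨ τ e ∈ Set.range p.2 ∪ Set.range q.2 := by
        have := Set.union_subset_union (hδ.range_subset p _) (hδ.range_subset q _) hregs
        rwa [Set.insert_union, Set.union_insert, Set.insert_eq_of_mem (Set.mem_insert _ _)] at this
      · exact h ▸ hτd
      · have τe_eq : τ e = e := τ.injective (hτ _ h)
        rw [τe_eq] at h ⊢
        exact hwZ ⟨by simp [he], h⟩
    obtain ⟨v, hvZ, hv⟩ := ih _ hw' hwZ' (by simpa using hn)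
    exact ⟨(a, τ d) :: v, dataSet_cons (a, τ d) v ▸ Set.insert_subset hτd hvZ, hv⟩

theorem IsEquivariant.exists_merges [Infinite D] [Fintype R] (hδ : IsEquivariant δ)
    {Z : Set D} (hZ : 2 * Fintype.card R < Z.ncard) {w : List (A × D)}
    (hw : ∀ p q, Merges δ w p q) (p q : Config L R D) :
    ∃ v, dataSet v ⊆ Z ∧ Merges δ v p q := by
  obtain ⟨τ, hτ⟩ := exists_perm_disjoint_image (dataSet_finite w)
    ((Set.finite_range p.2).union (Set.finite_range q.2))
  have map_map_symm (c : Config L R D) : Config.map τ (Config.map τ.symm c) = c :=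
    Prod.ext rfl (funext fun r => τ.apply_symm_apply _)
  have hw' := (hδ.merges_map τ).2 (hw (Config.map τ.symm p) (Config.map τ.symm q))
  rw [map_map_symm, map_map_symm] at hw'
  refine hδ.exists_merges_of_inter_subset hZ _ hw' ?_
  rw [dataSet_map, hτ.inter_eq]
  exact Set.empty_subset Z

/-- The data values relevant to a pair of configurations in the presence of the data set `Z`: the
contents of both families of registers and the elements of `Z`. -/
def pairData (Z : Set D) (x : Config L R D × Config L R D) : (R ⊕ R) ⊕ Z → D :=
  Sum.elim (Sum.elim x.1.2 x.2.2) Subtype.val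

/-- The type of a pair of configurations over the data set `Z`: the two locations and the equality
pattern of the relevant data. It determines the pair up to permutations fixing `Z`
pointwise. -/
def pairType (Z : Set D) (x : Config L R D × Config L R D) :
    (L × L) × ((R ⊕ R) ⊕ Z → (R ⊕ R) ⊕ Z → Prop) :=
  ((x.1.1, x.2.1), fun i j => pairData Z x i = pairData Z x j)

theorem exists_perm_map_eq_of_pairType_eq [Infinite D] [Finite R] {Z : Set D} (hZ : Z.Finite)
    {x y : Config L R D × Config L R D} (h : pairType Z x = pairType Z y) :
    ∃ τ : Equiv.Perm D, (∀ z ∈ Z, τ z = z) ∧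
      Config.map τ x.1 = y.1 ∧ Config.map τ x.2 = y.2 := by
  have := hZ.to_subtype
  simp only [pairType, Prod.mk.injEq] at h
  obtain ⟨⟨hloc₁, hloc₂⟩, hdata⟩ := h
  obtain ⟨τ, hτ⟩ := exists_perm_apply_eq fun i j => iff_of_eq (congrFun₂ hdata i j)
  exact ⟨τ, fun z hz => hτ (Sum.inr ⟨z, hz⟩),
    Prod.ext hloc₁ (funext fun r => hτ (Sum.inl (Sum.inl r))),
    Prod.ext hloc₂ (funext fun r => hτ (Sum.inl (Sum.inr r)))⟩

theorem IsEquivariant.exists_forall_merges [Infinite D] [Finite L] [Fintype R]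
    (hδ : IsEquivariant δ) {Z : Set D} (hZ : 2 * Fintype.card R < Z.ncard) {w : List (A × D)}
    (hw : ∀ p q, Merges δ w p q) : ∃ v, dataSet v ⊆ Z ∧ ∀ p q, Merges δ v p q := by
  have hZfin : Z.Finite := Set.finite_of_ncard_pos (pos_of_gt hZ)
  have := hZfin.to_subtype
  refine exists_forall_merges_of_invariant (pairType Z) (fun v hvZ x y hxy hx => ?_)
    (hδ.exists_merges hZ hw)
  obtain ⟨τ, hτ, hx₁, hx₂⟩ := exists_perm_map_eq_of_pairType_eq hZfin hxy
  rw [← hx₁, ← hx₂]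
  exact (hδ.merges_map_of_fixed fun d hd => hτ d (hvZ hd)).2 hx

end Equivariant

section RegisterAutomaton

variable {L A R D : Type}

theorem RC.sat_comp {E : Type} {f : D → E} (hf : f.Injective) (ν : R → D) (d : D) (φ : RC R) :
    RC.sat (f ∘ ν) (f d) φ ↔ RC.sat ν d φ := by
  induction φ with
  | tt => rfl
  | req r => exact hf.eq_iff
  | conj φ ψ ihφ ihψ => exact and_congr ihφ ihψ
  | neg φ ih => exact not_congr ih

theorem comp_updVal {E : Type} (f : D → E) (ν : R → D) (up : Set R) (d : D) :
    f ∘ updVal ν up d = updVal (f ∘ ν) up (f d) :=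
  funext fun _ => apply_ite f _ _ _

theorem Step.map {E : Type} {f : D → E} (hf : f.Injective) {T : Set (RATrans L A R)}
    {q q' : Config L R D} {i : A × D} (h : Step T q i q') :
    Step T (Config.map f q) (Prod.map id f i) (Config.map f q') := by
  obtain ⟨φ, up, ℓ', hT, hφ, rfl⟩ := h
  exact ⟨φ, up, ℓ', hT, (RC.sat_comp hf _ _ φ).2 hφ, Prod.ext rfl (comp_updVal f _ up _)⟩

theorem exists_isEquivariant_step_iff {T : Set (RATrans L A R)} (hcomp : RAComplete D T)
    (hdet : RADet D T) :
    ∃ δ : Config L R D → A × D → Config L R D,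
      IsEquivariant δ ∧ ∀ q i q', Step T q i q' ↔ δ q i = q' := by
  choose δ hδ using hcomp
  exact ⟨δ, fun τ q i => hdet _ _ _ _ (hδ _ _) ((hδ q i).map τ.injective),
    fun q i q' => ⟨hdet _ _ _ _ (hδ q i), fun h => h ▸ hδ q i⟩⟩

variable {T : Set (RATrans L A R)} {δ : Config L R D → A × D → Config L R D}

theorem postWord_eq_image (hδ : ∀ q i q', Step T q i q' ↔ δ q i = q') (S : Set (Config L R D))
    (w : List (A × D)) : postWord T S w = (fun q => w.foldl δ q) '' S := by
  induction w generalizing S with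
  | nil => exact (Set.image_id S).symm
  | cons i w ih =>
    have postStep_eq : postStep T S i = (fun q => δ q i) '' S := by
      simp only [postStep, hδ, Set.image]
    rw [postWord, ih, postStep_eq, Set.image_image]
    rfl

theorem isSync_iff_merges [Nonempty (Config L R D)] (hδ : ∀ q i q', Step T q i q' ↔ δ q i = q')
    {w : List (A × D)} : IsSync D T w ↔ w ≠ [] ∧ ∀ p q, Merges δ w p q := by
  rw [IsSync, postWord_eq_image hδ, Set.image_univ,
    Set.exists_eq_singleton_iff_nonempty_subsingleton,
    and_iff_right (Set.range_nonempty _), Set.Subsingleton]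
  simp only [Set.forall_mem_range, Merges]

end RegisterAutomaton

theorem stmt2_general {L A R D : Type} [Finite L] [Fintype R] [Infinite D]
    (T : Set (RATrans L A R))
    (hcomp : RAComplete D T) (hdet : RADet D T) (hsync : ∃ w : List (A × D), IsSync D T w)
    (Z : Set D) (hZ : 2 * Fintype.card R < Z.ncard) :
    ∃ w : List (A × D), IsSync D T w ∧ dataSet w ⊆ Z := by
  obtain ⟨δ, hequiv, hδ⟩ := exists_isEquivariant_step_iff hcomp hdet
  obtain ⟨w, hw⟩ := hsync
  have : Nonempty (Config L R D) := hw.2.nonempty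
  obtain ⟨hne, hmerges⟩ := (isSync_iff_merges hδ).1 hw
  obtain ⟨v, hvZ, hv⟩ := hequiv.exists_forall_merges hZ hmerges
  obtain ⟨z, hz⟩ := Set.nonempty_of_ncard_ne_zero (Nat.ne_zero_of_lt hZ)
  -- A nonempty word is required, and `v` may be empty.
  let i : A × D := ((w.head hne).1, z)
  refine ⟨i :: v, (isSync_iff_merges hδ).2 ⟨by simp, fun p q => hv (δ p i) (δ q i)⟩, ?_⟩
  rw [dataSet_cons]
  exact Set.insert_subset hz hvZ

/-- every complete DRA over an infinite data domain that admits a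
synchronizing data word admits one with data efficiency at most `2|R| + 1`. -/
theorem stmt2 {L A R D : Type} [Fintype L] [Fintype A] [Fintype R] [Infinite D]
    (T : Set (RATrans L A R))
    (hcomp : RAComplete D T) (hdet : RADet D T)
    (hsync : ∃ w : List (A × D), IsSync D T w) :
    ∃ w : List (A × D), IsSync D T w ∧ (dataSet w).ncard ≤ 2 * Fintype.card R + 1 := by
  obtain ⟨Z, hZ⟩ := Infinite.exists_subset_card_eq D (2 * Fintype.card R + 1)
  rw [← Set.ncard_coe_finset] at hZ
  obtain ⟨w, hw, hwZ⟩ := stmt2_general T hcomp hdet hsync Z (by omega)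
  exact ⟨w, hw, hZ ▸ Set.ncard_le_ncard hwZ Z.finite_toSet⟩
end

section
/- For every n ≥ 1 there exists a complete nondeterministic register automaton with a single register, over an alphabet with n + 3 letters and with at most 2n + 5 locations, that admits a synchronizing data word and such that in every synchronizing data word w some datum d ∈ data(w) occurs at least 2^n times in w. -/
open scoped Classical

/-!
Read the set of locations reachable with a fixed datum `d` in the register as a binary number. The
automaton lets a letter read with `d` lower this number by at most one, and letters read with other
data do not affect it. Configurations with different data are merged only by a letter that
overwrites the register, and such a letter, read with `d`, makes every location reachable with `d`.
After the last such letter the word therefore has to count down from `2 ^ (n + 1) - 1` to `2 ^ n`,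
the value of the sink location alone, which takes `2 ^ n - 1` further letters with datum `d`.
-/

theorem updVal_empty {R D : Type} (ν : R → D) (d : D) : updVal ν ∅ d = ν := by
  funext r
  simp [updVal]

theorem updVal_univ {R D : Type} (ν : R → D) (d : D) : updVal ν Set.univ d = fun _ => d := by
  funext r
  simp [updVal]

theorem postWord_append {L A R D : Type} (T : Set (RATrans L A R)) (S : Set (Config L R D))
    (u v : List (A × D)) : postWord T S (u ++ v) = postWord T (postWord T S u) v := by
  induction u generalizing S with
  | nil => rfl
  | cons _ _ ih => exact ih _

theorem RAComplete.nonempty_postWord {L A R D : Type} {T : Set (RATrans L A R)}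
    (hT : RAComplete D T) {S : Set (Config L R D)} (hS : S.Nonempty) (w : List (A × D)) :
    (postWord T S w).Nonempty := by
  induction w generalizing S with
  | nil => exact hS
  | cons p w ih =>
    obtain ⟨q, hq⟩ := hS
    obtain ⟨q', hstep⟩ := hT q p
    exact ih ⟨q', q, hq, hstep⟩

/-- The locations of the configurations in `S` all of whose registers hold `d`. With a single
register, the sets `locationsAt d S` for varying `d` determine `S`. -/
def locationsAt {L R D : Type} (d : D) (S : Set (Config L R D)) : Set L :=
  {ℓ | (ℓ, fun _ => d) ∈ S}

theorem locationsAt_singleton {L R D : Type} (d : D) (ℓ : L) :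
    locationsAt d {((ℓ, fun _ => d) : Config L R D)} = {ℓ} := by
  ext ℓ'
  simp [locationsAt]

theorem ext_locationsAt {L D : Type} {S S' : Set (Config L Unit D)}
    (h : ∀ d, locationsAt d S = locationsAt d S') : S = S' := by
  ext ⟨ℓ, ν⟩
  exact Set.ext_iff.mp (h (ν ())) ℓ

theorem exists_eq_append_cons_forall_not {α : Type*} {p : α → Prop} {l : List α}
    (h : ∃ x ∈ l, p x) : ∃ u x v, l = u ++ x :: v ∧ p x ∧ ∀ y ∈ v, ¬ p y := by
  induction l with
  | nil => simp at h
  | cons y l ih =>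
    by_cases hl : ∃ x ∈ l, p x
    · obtain ⟨u, x, v, rfl, hx⟩ := ih hl
      exact ⟨y :: u, x, v, rfl, hx⟩
    · exact ⟨[], y, l, rfl, ((List.exists_mem_cons_iff p y l).mp h).resolve_right hl,
        fun z hz hpz => hl ⟨z, hz, hpz⟩⟩

/-- The natural number whose binary expansion has its ones at the positions in `X`. -/
noncomputable def binValue {N : ℕ} (X : Set (Fin N)) : ℕ :=
  ∑ ℓ ∈ X.toFinset, 2 ^ (ℓ : ℕ)

section BinValue

variable {N : ℕ}

theorem binValue_mono {X Y : Set (Fin N)} (h : X ⊆ Y) : binValue X ≤ binValue Y :=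
  Finset.sum_le_sum_of_subset (Set.toFinset_mono h)

theorem binValue_singleton (ℓ : Fin N) : binValue {ℓ} = 2 ^ (ℓ : ℕ) := by
  simp [binValue]

theorem binValue_union {X Y : Set (Fin N)} (h : Disjoint X Y) :
    binValue (X ∪ Y) = binValue X + binValue Y := by
  simp only [binValue, Set.toFinset_union]
  exact Finset.sum_union (Set.disjoint_toFinset.mpr h)

theorem binValue_univ_add_one : binValue (Set.univ : Set (Fin N)) + 1 = 2 ^ N := by
  simpa [binValue, Fin.sum_univ_eq_sum_range (2 ^ ·)] using geom_sum_mul_add (1 : ℕ) N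

theorem binValue_Iio_add_one (ℓ : Fin N) : binValue (Set.Iio ℓ) + 1 = 2 ^ (ℓ : ℕ) := by
  have hmap : binValue (Set.Iio ℓ) = ∑ i ∈ (Finset.Iio ℓ).map Fin.valEmbedding, 2 ^ i := by
    simp only [binValue, Set.toFinset_Iio, Finset.sum_map, Fin.valEmbedding_apply]
  rw [hmap, Fin.map_valEmbedding_Iio, Nat.Iio_eq_range]
  simpa using geom_sum_mul_add (1 : ℕ) ℓ

end BinValue

/-- The moves of one bit of the counter: the letter `i` asks to decrement, at its lowest set bit
`i`, the number whose set bits are the occupied locations. A location below `i` witnesses that `i`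
is not the lowest set bit, and the counter is then reset to its maximal value. The move to the sink
`Fin.last n`, which no letter decrements, is always possible and keeps the automaton complete. -/
def CounterMove {n : ℕ} (i : Fin n) (ℓ ℓ' : Fin (n + 1)) : Prop :=
  ℓ' = Fin.last n ∨ (i.castSucc < ℓ ∧ ℓ' = ℓ) ∨ (ℓ = i.castSucc ∧ ℓ' < i.castSucc) ∨
    ℓ < i.castSucc

/-- The locations occupied after all locations in `X` have made every counter move on `i`. -/
def counterStep {n : ℕ} (X : Set (Fin (n + 1))) (i : Fin n) : Set (Fin (n + 1)) :=
  {ℓ' | ∃ ℓ ∈ X, CounterMove i ℓ ℓ'}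

section Counter

variable {n : ℕ} {X : Set (Fin (n + 1))} {i : Fin n}

theorem last_mem_counterStep (hX : X.Nonempty) : Fin.last n ∈ counterStep X i :=
  hX.imp fun _ hℓ => ⟨hℓ, Or.inl rfl⟩

theorem last_mem_foldl_counterStep (hX : Fin.last n ∈ X) (w : List (Fin n)) :
    Fin.last n ∈ w.foldl counterStep X := by
  induction w generalizing X with
  | nil => exact hX
  | cons _ _ ih => exact ih (last_mem_counterStep ⟨_, hX⟩)

theorem foldl_counterStep_empty (w : List (Fin n)) : w.foldl counterStep ∅ = ∅ := by
  induction w with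
  | nil => rfl
  | cons i w ih => simpa [counterStep] using ih

theorem counterStep_eq_univ_of_exists_lt (h : ∃ ℓ ∈ X, ℓ < i.castSucc) :
    counterStep X i = Set.univ :=
  Set.eq_univ_of_forall fun _ => h.imp fun _ hℓ => ⟨hℓ.1, Or.inr (Or.inr (Or.inr hℓ.2))⟩

theorem subset_counterStep_of_forall_lt (h : ∀ ℓ ∈ X, i.castSucc < ℓ) : X ⊆ counterStep X i :=
  fun ℓ hℓ => ⟨ℓ, hℓ, Or.inr (Or.inl ⟨h ℓ hℓ, rfl⟩)⟩

theorem counterStep_of_isLeast (h : IsLeast X i.castSucc) :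
    counterStep X i = insert (Fin.last n) (X \ {i.castSucc} ∪ Set.Iio i.castSucc) := by
  ext ℓ'
  simp only [Set.mem_insert_iff, Set.mem_union, Set.mem_sdiff, Set.mem_singleton_iff, Set.mem_Iio]
  constructor
  · rintro ⟨ℓ, hℓ, hlast | ⟨hlt, rfl⟩ | ⟨-, hlow⟩ | hlow⟩
    · exact Or.inl hlast
    · exact Or.inr (Or.inl ⟨hℓ, hlt.ne'⟩)
    · exact Or.inr (Or.inr hlow)
    · exact absurd hlow (h.2 hℓ).not_gt
  · rintro (rfl | ⟨hℓ, hne⟩ | hlow)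
    · exact last_mem_counterStep h.nonempty
    · exact ⟨ℓ', hℓ, Or.inr (Or.inl ⟨lt_of_le_of_ne (h.2 hℓ) (Ne.symm hne), rfl⟩)⟩
    · exact ⟨_, h.1, Or.inr (Or.inr (Or.inl ⟨rfl, hlow⟩))⟩

theorem binValue_le_binValue_counterStep_add_one (X : Set (Fin (n + 1))) (i : Fin n) :
    binValue X ≤ binValue (counterStep X i) + 1 := by
  by_cases hlow : ∃ ℓ ∈ X, ℓ < i.castSucc
  · rw [counterStep_eq_univ_of_exists_lt hlow]
    exact (binValue_mono (Set.subset_univ X)).trans (Nat.le_succ _)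
  push Not at hlow
  by_cases hi : i.castSucc ∈ X
  · have hdisj : Disjoint (X \ {i.castSucc}) (Set.Iio i.castSucc) :=
      Set.disjoint_left.mpr fun ℓ hℓ => (hlow ℓ hℓ.1).not_gt
    calc binValue X = binValue (X \ {i.castSucc} ∪ {i.castSucc}) := by
          rw [Set.sdiff_union_of_subset (Set.singleton_subset_iff.mpr hi)]
      _ = binValue (X \ {i.castSucc}) + (binValue (Set.Iio i.castSucc) + 1) := by
          rw [binValue_union Set.disjoint_sdiff_left, binValue_singleton, binValue_Iio_add_one]
      _ = binValue (X \ {i.castSucc} ∪ Set.Iio i.castSucc) + 1 := by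
          rw [binValue_union hdisj, add_assoc]
      _ ≤ binValue (counterStep X i) + 1 := by
          rw [counterStep_of_isLeast ⟨hi, hlow⟩]
          exact Nat.add_le_add_right (binValue_mono (Set.subset_insert _ _)) 1
  · have habove : ∀ ℓ ∈ X, i.castSucc < ℓ := fun ℓ hℓ =>
      lt_of_le_of_ne (hlow ℓ hℓ) fun h => hi (h ▸ hℓ)
    exact (binValue_mono (subset_counterStep_of_forall_lt habove)).trans (Nat.le_succ _)

theorem binValue_le_binValue_foldl_counterStep_add_length (X : Set (Fin (n + 1)))
    (w : List (Fin n)) : binValue X ≤ binValue (w.foldl counterStep X) + w.length := by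
  induction w generalizing X with
  | nil => exact le_rfl
  | cons i w ih =>
    have hstep := binValue_le_binValue_counterStep_add_one X i
    have hrest := ih (counterStep X i)
    simp only [List.foldl_cons, List.length_cons]
    omega

/- The words are those of the ruler sequence: counting down the bits below `i + 1` means counting
down those below `i`, decrementing at `i`, and counting down those below `i` again. -/
theorem exists_foldl_counterStep_union_Iio (b : Fin (n + 1)) :
    ∃ w : List (Fin n), ∀ U : Set (Fin (n + 1)), Fin.last n ∈ U → (∀ ℓ ∈ U, b ≤ ℓ) →
      w.foldl counterStep (U ∪ Set.Iio b) = U := by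
  induction b using Fin.induction with
  | zero => exact ⟨[], fun U _ _ => by simp⟩
  | succ i ih =>
    obtain ⟨w, hw⟩ := ih
    refine ⟨w ++ i :: w, fun U hlast hU => ?_⟩
    have habove : ∀ ℓ ∈ U, i.castSucc < ℓ := fun ℓ hℓ => Fin.castSucc_lt_iff_succ_le.mpr (hU ℓ hℓ)
    have hsplit : U ∪ Set.Iio i.succ = insert i.castSucc U ∪ Set.Iio i.castSucc := by
      ext ℓ
      simp only [Set.mem_union, Set.mem_insert_iff, Set.mem_Iio, ← Fin.le_castSucc_iff,
        le_iff_eq_or_lt]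
      tauto
    have hleast : IsLeast (insert i.castSucc U) i.castSucc :=
      ⟨Set.mem_insert _ _, by rintro ℓ (rfl | hℓ); exacts [le_rfl, (habove ℓ hℓ).le]⟩
    have hdecr : counterStep (insert i.castSucc U) i = U ∪ Set.Iio i.castSucc := by
      rw [counterStep_of_isLeast hleast,
        Set.insert_sdiff_self_of_notMem fun h => (habove _ h).false,
        Set.insert_eq_of_mem (Set.mem_union_left _ hlast)]
    rw [List.foldl_append, List.foldl_cons, hsplit, hw _ (Set.mem_insert_of_mem _ hlast) hleast.2,
      hdecr, hw U hlast fun ℓ hℓ => (habove ℓ hℓ).le]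

theorem exists_foldl_counterStep_univ (n : ℕ) :
    ∃ w : List (Fin n), w.foldl counterStep Set.univ = {Fin.last n} := by
  obtain ⟨w, hw⟩ := exists_foldl_counterStep_union_Iio (Fin.last n)
  refine ⟨w, ?_⟩
  have huniv : {Fin.last n} ∪ Set.Iio (Fin.last n) = Set.univ :=
    Set.eq_univ_of_forall fun ℓ => (Fin.le_last ℓ).eq_or_lt
  simpa [huniv] using hw {Fin.last n} rfl (by simp)

end Counter

/-- The transitions of the counter automaton over an alphabet `A` decoded by `bit`. A letter with
`bit a = none` stores its datum and moves to an arbitrary location; a letter with `bit a = some i`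
makes the counter moves on `i` in the configurations whose register holds its datum and leaves all
others unchanged. -/
inductive CounterTrans {A : Type} {n : ℕ} (bit : A → Option (Fin n)) :
    RATrans (Fin (n + 1)) A Unit → Prop
  | reset {ℓ ℓ' : Fin (n + 1)} {a : A} (ha : bit a = none) :
      CounterTrans bit (ℓ, a, RC.tt, Set.univ, ℓ')
  | move {ℓ ℓ' : Fin (n + 1)} {a : A} {i : Fin n} (ha : bit a = some i) (h : CounterMove i ℓ ℓ') :
      CounterTrans bit (ℓ, a, RC.req (), ∅, ℓ')
  | skip {ℓ : Fin (n + 1)} {a : A} {i : Fin n} (ha : bit a = some i) :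
      CounterTrans bit (ℓ, a, RC.neg (RC.req ()), ∅, ℓ)

/-- The counter automaton, given by its transition relation in the form expected by `Step`. -/
def counterRA {A : Type} {n : ℕ} (bit : A → Option (Fin n)) : Set (RATrans (Fin (n + 1)) A Unit) :=
  {t | CounterTrans bit t}

/-- The counter letters, in order, that the data word `w` reads with datum `d`. -/
def bitsRead {A D : Type} [DecidableEq D] {n : ℕ} (bit : A → Option (Fin n)) (d : D)
    (w : List (A × D)) : List (Fin n) :=
  (w.filter (·.2 = d)).filterMap (bit ·.1)

section CounterAutomaton

variable {A D : Type} {n : ℕ} {bit : A → Option (Fin n)} {a : A} {i : Fin n}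

theorem step_counterRA_of_eq_none (ha : bit a = none) {q q' : Config (Fin (n + 1)) Unit D} {d : D} :
    Step (counterRA bit) q (a, d) q' ↔ q'.2 = fun _ => d := by
  obtain ⟨ℓ', ν'⟩ := q'
  constructor
  · rintro ⟨φ, up, ℓ', htrans, -, heq⟩
    cases htrans <;> simp_all [updVal_univ]
  · rintro rfl
    exact ⟨_, _, ℓ', .reset ha, trivial, by rw [updVal_univ]⟩

theorem step_counterRA_of_eq_some (ha : bit a = some i) {q q' : Config (Fin (n + 1)) Unit D}
    {d : D} : Step (counterRA bit) q (a, d) q' ↔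
      q'.2 = q.2 ∧ (q.2 () = d ∧ CounterMove i q.1 q'.1 ∨ q.2 () ≠ d ∧ q'.1 = q.1) := by
  obtain ⟨ℓ, ν⟩ := q
  obtain ⟨ℓ', ν'⟩ := q'
  constructor
  · rintro ⟨φ, up, ℓ', htrans, hsat, heq⟩
    cases htrans <;> simp_all [updVal_empty, RC.sat]
  · rintro ⟨rfl, ⟨heq, hmove⟩ | ⟨hne, rfl⟩⟩
    · exact ⟨_, _, ℓ', .move ha hmove, heq, by rw [updVal_empty]⟩
    · exact ⟨_, _, ℓ', .skip ha, hne, by rw [updVal_empty]⟩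

theorem raComplete_counterRA (D : Type) (bit : A → Option (Fin n)) :
    RAComplete D (counterRA bit) := by
  rintro ⟨ℓ, ν⟩ ⟨a, d⟩
  rcases ha : bit a with _ | i
  · exact ⟨(ℓ, fun _ => d), (step_counterRA_of_eq_none ha).mpr rfl⟩
  · by_cases hν : ν () = d
    · exact ⟨(Fin.last n, ν),
        (step_counterRA_of_eq_some ha).mpr ⟨rfl, Or.inl ⟨hν, Or.inl rfl⟩⟩⟩
    · exact ⟨(ℓ, ν), (step_counterRA_of_eq_some ha).mpr ⟨rfl, Or.inr ⟨hν, rfl⟩⟩⟩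

theorem postStep_counterRA_of_eq_none (ha : bit a = none) {S : Set (Config (Fin (n + 1)) Unit D)}
    (hS : S.Nonempty) (d : D) : postStep (counterRA bit) S (a, d) = {q | q.2 = fun _ => d} := by
  ext q'
  simp only [postStep, step_counterRA_of_eq_none ha, Set.mem_ofPred_eq]
  exact ⟨fun ⟨_, _, h⟩ => h, fun h => hS.imp fun _ hq => ⟨hq, h⟩⟩

theorem locationsAt_postStep_self (ha : bit a = some i) (S : Set (Config (Fin (n + 1)) Unit D))
    (d : D) : locationsAt d (postStep (counterRA bit) S (a, d)) =
      counterStep (locationsAt d S) i := by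
  ext ℓ'
  constructor
  · rintro ⟨⟨ℓ, ν⟩, hq, hstep⟩
    obtain ⟨rfl, ⟨-, hmove⟩ | ⟨hne, -⟩⟩ := (step_counterRA_of_eq_some ha).mp hstep
    · exact ⟨ℓ, hq, hmove⟩
    · exact absurd rfl hne
  · rintro ⟨ℓ, hℓ, hmove⟩
    exact ⟨_, hℓ, (step_counterRA_of_eq_some ha).mpr ⟨rfl, Or.inl ⟨rfl, hmove⟩⟩⟩

theorem locationsAt_postStep_of_ne (ha : bit a = some i) (S : Set (Config (Fin (n + 1)) Unit D))
    {d e : D} (hde : d ≠ e) :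
    locationsAt d (postStep (counterRA bit) S (a, e)) = locationsAt d S := by
  ext ℓ'
  constructor
  · rintro ⟨⟨ℓ, ν⟩, hq, hstep⟩
    obtain ⟨rfl, ⟨heq, -⟩ | ⟨-, rfl⟩⟩ := (step_counterRA_of_eq_some ha).mp hstep
    · exact absurd heq hde
    · exact hq
  · exact fun hℓ => ⟨_, hℓ, (step_counterRA_of_eq_some ha).mpr ⟨rfl, Or.inr ⟨hde, rfl⟩⟩⟩

theorem length_bitsRead_le [DecidableEq D] (bit : A → Option (Fin n)) (d : D) (w : List (A × D)) :
    (bitsRead bit d w).length ≤ (w.map Prod.snd).count d := by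
  calc (bitsRead bit d w).length ≤ (w.filter (·.2 = d)).length := List.length_filterMap_le _ _
    _ = (w.map Prod.snd).count d := by
      simp only [← List.countP_eq_length_filter, List.count, List.countP_map, Function.comp_def,
        beq_eq_decide]

theorem locationsAt_postWord [DecidableEq D] {w : List (A × D)}
    (hw : ∀ p ∈ w, bit p.1 ≠ none) (d : D) (S : Set (Config (Fin (n + 1)) Unit D)) :
    locationsAt d (postWord (counterRA bit) S w) =
      (bitsRead bit d w).foldl counterStep (locationsAt d S) := by
  induction w generalizing S with
  | nil => rfl
  | cons p w ih =>
    obtain ⟨a, e⟩ := p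
    obtain ⟨ha, hw⟩ := List.forall_mem_cons.mp hw
    obtain ⟨i, ha⟩ := Option.ne_none_iff_exists'.mp ha
    rw [postWord, ih hw]
    by_cases hde : d = e
    · subst hde
      rw [locationsAt_postStep_self ha]
      simp [bitsRead, ha]
    · rw [locationsAt_postStep_of_ne ha S hde]
      simp [bitsRead, Ne.symm hde]

theorem exists_isSync_counterRA [Nonempty D] (hbit : Function.Surjective bit) :
    ∃ w : List (A × D), IsSync D (counterRA bit) w := by
  obtain ⟨d⟩ := ‹Nonempty D›
  obtain ⟨r, hr⟩ := hbit none
  choose letter hletter using fun i => hbit (some i)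
  obtain ⟨c, hc⟩ := exists_foldl_counterStep_univ n
  have hcount : ∀ p ∈ c.map fun i => (letter i, d), bit p.1 ≠ none := by simp [hletter]
  refine ⟨(r, d) :: c.map fun i => (letter i, d), by simp, (Fin.last n, fun _ => d), ?_⟩
  rw [postWord, postStep_counterRA_of_eq_none hr ⟨(0, fun _ => d), Set.mem_univ _⟩]
  refine ext_locationsAt fun e => ?_
  rw [locationsAt_postWord hcount]
  by_cases hde : e = d
  · subst hde
    have hread : bitsRead bit e (c.map fun i => (letter i, e)) = c := by
      simp [bitsRead, List.filter_map, List.filterMap_map, Function.comp_def, hletter]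
    simpa [hread, locationsAt_singleton, locationsAt] using hc
  · have hconst : (fun _ : Unit => e) ≠ fun _ => d := fun h => hde (congrFun h ())
    simpa [locationsAt, hconst] using foldl_counterStep_empty _

theorem last_mem_locationsAt_postWord {w : List (A × D)} (hw : ∀ p ∈ w, bit p.1 ≠ none) {d : D}
    {S : Set (Config (Fin (n + 1)) Unit D)} (hS : Fin.last n ∈ locationsAt d S) :
    Fin.last n ∈ locationsAt d (postWord (counterRA bit) S w) := by
  rw [locationsAt_postWord hw]
  exact last_mem_foldl_counterStep hS _

theorem exists_eq_none_of_isSync [Nontrivial D] {w : List (A × D)}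
    (hw : IsSync D (counterRA bit) w) : ∃ p ∈ w, bit p.1 = none := by
  by_contra! hcount
  obtain ⟨d, e, hde⟩ := exists_pair_ne D
  obtain ⟨-, q, hq⟩ := hw
  have hsink : ∀ d : D, (Fin.last n, fun _ => d) = q := fun d => by
    have hlast := last_mem_locationsAt_postWord hcount (d := d) (S := Set.univ) trivial
    rwa [hq] at hlast
  have hregister := congrArg Prod.snd ((hsink d).trans (hsink e).symm)
  exact hde (congrFun hregister ())

theorem two_pow_le_count_add_one_of_postWord_eq_singleton [DecidableEq D] {w : List (A × D)}
    (hw : ∀ p ∈ w, bit p.1 ≠ none) {d : D} {q : Config (Fin (n + 1)) Unit D}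
    (hq : postWord (counterRA bit) {q | q.2 = fun _ => d} w = {q}) :
    2 ^ n ≤ (w.map Prod.snd).count d + 1 := by
  have hstart : locationsAt d {q : Config (Fin (n + 1)) Unit D | q.2 = fun _ => d} = Set.univ := by
    simp [locationsAt]
  have hend : (bitsRead bit d w).foldl counterStep Set.univ = {Fin.last n} := by
    have hlast := last_mem_locationsAt_postWord hw (hstart ▸ Set.mem_univ (Fin.last n))
    rw [hq] at hlast
    obtain rfl : (Fin.last n, fun _ => d) = q := hlast
    rw [← hstart, ← locationsAt_postWord hw, hq, locationsAt_singleton]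
  have hdecr := binValue_le_binValue_foldl_counterStep_add_length Set.univ (bitsRead bit d w)
  rw [hend, binValue_singleton, Fin.val_last] at hdecr
  have huniv : binValue (Set.univ : Set (Fin (n + 1))) + 1 = 2 ^ (n + 1) := binValue_univ_add_one
  have hlength := length_bitsRead_le bit d w
  rw [pow_succ] at huniv
  omega

theorem exists_two_pow_le_count_of_isSync [Nontrivial D] [DecidableEq D] {w : List (A × D)}
    (hw : IsSync D (counterRA bit) w) : ∃ d ∈ dataSet w, 2 ^ n ≤ (w.map Prod.snd).count d := by
  obtain ⟨u, ⟨a, d⟩, v, rfl, ha, hv⟩ :=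
    exists_eq_append_cons_forall_not (exists_eq_none_of_isSync hw)
  refine ⟨d, ⟨(a, d), by simp, rfl⟩, ?_⟩
  obtain ⟨-, q, hq⟩ := hw
  have hreach : (postWord (counterRA bit) Set.univ u).Nonempty :=
    (raComplete_counterRA D bit).nonempty_postWord ⟨(0, fun _ => d), Set.mem_univ _⟩ u
  rw [postWord_append, postWord, postStep_counterRA_of_eq_none ha hreach] at hq
  have hcount := two_pow_le_count_add_one_of_postWord_eq_singleton hv hq
  simp only [List.map_append, List.map_cons, List.count_append, List.count_cons_self]
  omega

end CounterAutomaton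

theorem stmt10_general {A D : Type} [Fintype A] [Nontrivial D] [DecidableEq D] (n : ℕ)
    (hA : n < Fintype.card A) :
    ∃ T : Set (RATrans (Fin (n + 1)) A Unit),
      RAComplete D T ∧
      (∃ w : List (A × D), IsSync D T w) ∧
      ∀ w : List (A × D), IsSync D T w →
        ∃ d ∈ dataSet w, 2 ^ n ≤ (w.map Prod.snd).count d := by
  obtain ⟨letter⟩ : Nonempty (Option (Fin n) ↪ A) :=
    Function.Embedding.nonempty_of_card_le (by simpa using hA)
  have hbit := Function.invFun_surjective letter.injective
  exact ⟨_, raComplete_counterRA D _, exists_isSync_counterRA hbit,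
    fun _ => exists_two_pow_le_count_of_isSync⟩

/-- for every `n ≥ 1` there is a complete 1-NRA over an alphabet with
`n + 3` letters and at most `2n + 5` locations that admits a synchronizing data word
and in every synchronizing data word some datum occurs at least `2^n` times. -/
theorem stmt10 {D : Type} [Infinite D] [DecidableEq D] (n : ℕ) (hn : 1 ≤ n) :
    ∃ m : ℕ, m ≤ 2 * n + 5 ∧
    ∃ T : Set (RATrans (Fin m) (Fin (n + 3)) Unit),
      RAComplete D T ∧
      (∃ w : List (Fin (n + 3) × D), IsSync D T w) ∧
      ∀ w : List (Fin (n + 3) × D), IsSync D T w →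
        ∃ d ∈ dataSet w, 2 ^ n ≤ (w.map Prod.snd).count d :=
  ⟨n + 1, by omega, stmt10_general n (by simp)⟩
end
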